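/- arXiv:2309.08013 — 2 statements merged into one kernel-verified Lean document; each statement's English description precedes it below -/
import Mathlib

section
/- Let C1, C2 be real symmetric 3×3 matrices satisfying the standing assumptions, with eigenvalues λ1 > λ2 > λ3 > 0 of C1⁻¹C2, let e = √((λ1−λ2)/(λ1−λ3)), and let ν = (ν1,ν2) and μ = (μ1,μ2) be valid parameters. Define ρ(ν) = F(arcsin √((λ1−λ3)ν2/(λ1ν2+ν1)), e)/(2K(e)) and ρ(μ) analogously. Then the following are equivalent: (1) every point (x,y) ∈ ℝ² with (x,y,1)C_μ(x,y,1)ᵀ = 0 satisfies (x,y,1)C_ν(x,y,1)ᵀ < 0 (i.e. the ellipse C_μ lies in the interior of the ellipse C_ν); (2) ν1μ2 − ν2μ1 > 0; (3) ρ(μ) > ρ(ν). -/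
open Real Matrix Polynomial

/-- Incomplete elliptic integral of the first kind `F(φ,e)`. -/
noncomputable def ellF (φ e : ℝ) : ℝ :=
  ∫ τ in (0:ℝ)..φ, 1 / Real.sqrt (1 - e ^ 2 * Real.sin τ ^ 2)

/-- Complete elliptic integral of the first kind `K(e)`. -/
noncomputable def ellK (e : ℝ) : ℝ := ellF (Real.pi / 2) e

/-- Standing assumption (SA1): symmetric, positive definite upper-left 2×2 block,
negative determinant. -/
def SA1 (C : Matrix (Fin 3) (Fin 3) ℝ) : Prop :=
  C.IsSymm ∧ (∀ x y : ℝ, (x, y) ≠ (0, 0) → 0 < ![x, y, 0] ⬝ᵥ C.mulVec ![x, y, 0]) ∧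
    C.det < 0

/-!
Diagonalise the pencil: in suitable coordinates `C1 = ∑ dᵢ wᵢ²` and `C2 = ∑ λᵢ dᵢ wᵢ²`. Exactly one
`dᵢ` is negative, because `det C1 < 0` and `C1` is positive on a plane, and (SA3) makes it `d₃`.
Hence `C2 - λ₃ C1` is positive on every nonzero vector where `C1 ≥ 0`, so a valid `C_μ` is positive
there too, and every point of the conic `C_μ` satisfies `C1 < 0`. On that conic
`μ₂ C_ν = (ν₁ μ₂ - ν₂ μ₁) C1`, which makes the containment equivalent to the sign of the cross
product as soon as the conic has a real affine point. On the other side, `ρ` is a strictly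
increasing function of `(λ₁ - λ₃) ν₂ / (λ₁ ν₂ + ν₁)`, and two such fractions compare through the
same cross product.
-/

/-! ### Simultaneous diagonalisation of a pencil -/

section Diagonalisation

variable {n : Type*} [Fintype n]

lemma dotProduct_mulVec_eq_zero_of_eigenvalues_ne {R : Type*} [CommRing R] [NoZeroDivisors R]
    {A B : Matrix n n R} (hA : A.IsSymm) (hB : B.IsSymm) {a b : R} (hab : a ≠ b) {u v : n → R}
    (hu : B *ᵥ u = a • (A *ᵥ u)) (hv : B *ᵥ v = b • (A *ᵥ v)) : u ⬝ᵥ A *ᵥ v = 0 := by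
  have hcomm : ∀ {C : Matrix n n R}, C.IsSymm → u ⬝ᵥ C *ᵥ v = v ⬝ᵥ C *ᵥ u := fun hC => by
    rw [← dotProduct_transpose_mulVec, hC.eq]
  have heq : a * (u ⬝ᵥ A *ᵥ v) = b * (u ⬝ᵥ A *ᵥ v) :=
    calc a * (u ⬝ᵥ A *ᵥ v) = v ⬝ᵥ B *ᵥ u := by
          rw [hu, dotProduct_smul, smul_eq_mul, hcomm hA]
      _ = b * (u ⬝ᵥ A *ᵥ v) := by rw [← hcomm hB, hv, dotProduct_smul, smul_eq_mul]
  by_contra hne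
  exact hab (mul_right_cancel₀ hne heq)

variable [DecidableEq n]

lemma exists_mulVec_eq_smul_mulVec_of_isRoot {K : Type*} [Field K] {A B : Matrix n n K} {c : K}
    (hA : A.det ≠ 0) (hc : (A⁻¹ * B).charpoly.IsRoot c) :
    ∃ v : n → K, v ≠ 0 ∧ B *ᵥ v = c • (A *ᵥ v) := by
  rw [IsRoot, eval_charpoly] at hc
  obtain ⟨v, hv, hker⟩ := exists_mulVec_eq_zero_iff.mpr hc
  have heig : (A⁻¹ * B) *ᵥ v = c • v := by
    rw [sub_mulVec, sub_eq_zero, scalar_apply, ← smul_one_eq_diagonal, smul_mulVec,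
      one_mulVec] at hker
    exact hker.symm
  refine ⟨v, hv, ?_⟩
  rw [← mulVec_smul, ← heig, mulVec_mulVec, mul_nonsing_inv_cancel_left _ _ hA.isUnit]

lemma linearIndependent_of_mulVec_eq_smul_mulVec {K : Type*} [Field K] {A B : Matrix n n K}
    (hA : A.det ≠ 0) {ι : Type*} {l : ι → K} (hl : Function.Injective l) {v : ι → n → K}
    (hv0 : ∀ i, v i ≠ 0) (hv : ∀ i, B *ᵥ v i = l i • (A *ᵥ v i)) : LinearIndependent K v := by
  refine Module.End.eigenvectors_linearIndependent' (mulVecLin (A⁻¹ * B)) l hl v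
    fun i => ⟨Module.End.mem_eigenspace_iff.mpr ?_, hv0 i⟩
  rw [mulVecLin_apply, ← mulVec_mulVec, hv, mulVec_smul, mulVec_mulVec,
    nonsing_inv_mul _ hA.isUnit, one_mulVec]

theorem exists_transpose_mul_mul_eq_diagonal {K : Type*} [Field K] {A B : Matrix n n K}
    (hA : A.IsSymm) (hB : B.IsSymm) (hdet : A.det ≠ 0) {l : n → K} (hl : Function.Injective l)
    (hroot : ∀ i, (A⁻¹ * B).charpoly.IsRoot (l i)) :
    ∃ (P : Matrix n n K) (d : n → K), IsUnit P ∧ Pᵀ * A * P = diagonal d ∧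
      Pᵀ * B * P = diagonal (fun i => l i * d i) := by
  choose v hv0 hv using fun i => exists_mulVec_eq_smul_mulVec_of_isRoot hdet (hroot i)
  have hentry : ∀ (C : Matrix n n K) (i j : n),
      (of v * C * (of v)ᵀ) i j = v i ⬝ᵥ C *ᵥ v j := fun C i j => by
    rw [dotProduct_mulVec]; rfl
  have horth : ∀ {i j : n}, i ≠ j → v i ⬝ᵥ A *ᵥ v j = 0 := fun hij =>
    dotProduct_mulVec_eq_zero_of_eigenvalues_ne hA hB (hl.ne hij) (hv _) (hv _)
  refine ⟨(of v)ᵀ, fun i => v i ⬝ᵥ A *ᵥ v i, ?_, ?_, ?_⟩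
  · rw [isUnit_transpose, ← linearIndependent_rows_iff_isUnit]
    exact linearIndependent_of_mulVec_eq_smul_mulVec hdet hl hv0 hv
  all_goals
    ext i j
    rw [transpose_transpose, hentry]
    obtain rfl | hij := eq_or_ne i j
  · rw [diagonal_apply_eq]
  · rw [diagonal_apply_ne _ hij, horth hij]
  · rw [diagonal_apply_eq, hv, dotProduct_smul, smul_eq_mul]
  · rw [diagonal_apply_ne _ hij, hv, dotProduct_smul, horth hij, smul_zero]

lemma dotProduct_mulVec_mulVec_eq_sum {R : Type*} [CommRing R] {A P : Matrix n n R} {d : n → R}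
    (h : Pᵀ * A * P = diagonal d) (w : n → R) :
    (P *ᵥ w) ⬝ᵥ A *ᵥ (P *ᵥ w) = ∑ i, d i * w i ^ 2 := by
  calc (P *ᵥ w) ⬝ᵥ A *ᵥ (P *ᵥ w) = w ⬝ᵥ (Pᵀ * A * P) *ᵥ w := by
        rw [← mulVec_mulVec, ← mulVec_mulVec, dotProduct_mulVec w, vecMul_transpose]
    _ = ∑ i, d i * w i ^ 2 := by
        rw [h]
        exact Finset.sum_congr rfl fun i _ => by rw [mulVec_diagonal]; ring

lemma exists_diagonal_neg_of_det_neg {R : Type*} [CommRing R] [LinearOrder R]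
    [IsStrictOrderedRing R] {A P : Matrix n n R} {d : n → R} (h : Pᵀ * A * P = diagonal d)
    (hA : A.det < 0) (hP : IsUnit P) : ∃ i, d i < 0 := by
  have hP0 : P.det ≠ 0 := ((isUnit_iff_isUnit_det P).mp hP).ne_zero
  have hprod : ∏ i, d i = P.det ^ 2 * A.det := by
    rw [← det_diagonal, ← h, det_mul, det_mul, det_transpose]; ring
  by_contra! hd
  have hprod_nonneg : 0 ≤ P.det ^ 2 * A.det := hprod ▸ Finset.prod_nonneg fun i _ => hd i
  exact (mul_neg_of_pos_of_neg (by positivity) hA).not_ge hprod_nonneg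

end Diagonalisation

/-! ### Signs in a diagonal pencil -/

section Signs

variable {n : Type*} [Fintype n]

lemma sum_mul_sq_single_add_single [DecidableEq n] {R : Type*} [CommRing R] (d : n → R) {i j : n}
    (hij : i ≠ j) (a b : R) :
    ∑ k, d k * (Pi.single i a + Pi.single j b : n → R) k ^ 2 = d i * a ^ 2 + d j * b ^ 2 := by
  rw [Fintype.sum_eq_add i j hij fun k hk => by simp [hk.1, hk.2]]
  simp [hij, hij.symm]

lemma weight_pos_of_neg_of_pos_on_ker {R : Type*} [CommRing R] [LinearOrder R]
    [IsStrictOrderedRing R] {d : n → R} (φ : (n → R) →ₗ[R] R)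
    (hpos : ∀ w ≠ 0, φ w = 0 → 0 < ∑ k, d k * w k ^ 2) {i j : n} (hij : i ≠ j) (hi : d i < 0) :
    0 < d j := by
  classical
  -- The plane spanned by the `i`-th and `j`-th axes meets `ker φ` in a nonzero vector.
  set s := φ (Pi.single i 1)
  set t := φ (Pi.single j 1)
  have hφ : ∀ a b, φ (Pi.single i a + Pi.single j b) = a * s + b * t := fun a b => by
    rw [← mul_one a, ← mul_one b, ← smul_eq_mul, ← smul_eq_mul, Pi.single_smul, Pi.single_smul,
      map_add, map_smul, map_smul]
    simp [s, t]
  have hcomb : ∀ a b, a ≠ 0 ∨ b ≠ 0 → a * s + b * t = 0 → 0 < d i * a ^ 2 + d j * b ^ 2 := by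
    intro a b hab h
    rw [← sum_mul_sq_single_add_single d hij]
    refine hpos _ (fun h0 => ?_) ((hφ a b).trans h)
    have ha : a = 0 := by simpa [hij] using congrFun h0 i
    have hb : b = 0 := by simpa [hij.symm] using congrFun h0 j
    tauto
  by_cases hs : s = 0
  · have := hcomb 1 0 (by simp) (by simp [hs])
    linarith
  · have := hcomb t (-s) (by simp [hs]) (by ring)
    have : 0 < d j * s ^ 2 := by nlinarith [sq_nonneg t]
    exact pos_of_mul_pos_left this (sq_nonneg s)

lemma weight_neg_of_neg_of_null_imp_neg {d l : n → ℝ}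
    (hnull : ∀ w : n → ℝ, w ≠ 0 → ∑ k, l k * d k * w k ^ 2 = 0 → ∑ k, d k * w k ^ 2 < 0)
    {i m : n} (hm : 0 < l m) (hmi : l m < l i) (hi : d i < 0) : d m < 0 := by
  classical
  -- Otherwise `∑ l k * d k * w k ^ 2` has a null vector in the plane of the `i`-th and `m`-th axes
  -- on which `∑ d k * w k ^ 2` is nonnegative.
  by_contra! hdm
  have him : i ≠ m := by rintro rfl; exact hmi.false
  have hp : 0 ≤ l m * d m := by positivity
  have hq : 0 < -(l i * d i) := by nlinarith
  let w : n → ℝ := Pi.single i √(l m * d m) + Pi.single m √(-(l i * d i))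
  have hw : w ≠ 0 := fun h0 => by
    have : √(-(l i * d i)) = 0 := by simpa [w, him.symm] using congrFun h0 m
    exact (sqrt_pos.mpr hq).ne' this
  have hneg := hnull w hw (by
    rw [sum_mul_sq_single_add_single (fun k => l k * d k) him, sq_sqrt hp, sq_sqrt hq.le]; ring)
  rw [sum_mul_sq_single_add_single d him, sq_sqrt hp, sq_sqrt hq.le] at hneg
  have : 0 ≤ -d i * d m * (l i - l m) :=
    mul_nonneg (mul_nonneg (neg_nonneg.mpr hi.le) hdm) (sub_nonneg.mpr hmi.le)
  linarith

lemma mul_sum_mul_sq_lt_of_nonneg {R : Type*} [CommRing R] [LinearOrder R] [IsStrictOrderedRing R]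
    {d l : n → R} {m : n} (hl : ∀ i, i ≠ m → l m < l i) (hdm : d m < 0)
    (hd : ∀ i, i ≠ m → 0 < d i) {w : n → R} (hw : w ≠ 0)
    (hnonneg : 0 ≤ ∑ i, d i * w i ^ 2) :
    l m * ∑ i, d i * w i ^ 2 < ∑ i, l i * d i * w i ^ 2 := by
  obtain ⟨j, hjm, hj⟩ : ∃ j, j ≠ m ∧ w j ≠ 0 := by
    by_contra! hsupp
    have hwm : w m ≠ 0 := fun h0 =>
      hw (funext fun i => (eq_or_ne i m).elim (fun h => h ▸ h0) (hsupp i))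
    rw [Fintype.sum_eq_single m fun i him => by simp [hsupp i him]] at hnonneg
    have : 0 < w m ^ 2 := by positivity
    nlinarith
  rw [Finset.mul_sum]
  refine Finset.sum_lt_sum (fun i _ => ?_) ⟨j, Finset.mem_univ j, ?_⟩
  · rcases eq_or_ne i m with rfl | him
    · exact (mul_assoc _ _ _).ge
    · rw [mul_assoc]
      exact mul_le_mul_of_nonneg_right (hl i him).le
        (mul_nonneg (hd i him).le (sq_nonneg _))
  · rw [mul_assoc]
    have := hd j hjm
    exact mul_lt_mul_of_pos_right (hl j hjm) (by positivity)

theorem least_eigenvalue_mul_lt_and_exists_eq [DecidableEq n] {A B : Matrix n n ℝ} (hA : A.IsSymm)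
    (hB : B.IsSymm) (hdet : A.det < 0) (φ : (n → ℝ) →ₗ[ℝ] ℝ)
    (hφ : ∀ u ≠ 0, φ u = 0 → 0 < u ⬝ᵥ A *ᵥ u) {l : n → ℝ} (hl : Function.Injective l)
    (hroot : ∀ i, (A⁻¹ * B).charpoly.IsRoot (l i)) {m : n} (hm : 0 < l m)
    (hmin : ∀ i, i ≠ m → l m < l i)
    (hnull : ∀ u ≠ 0, u ⬝ᵥ B *ᵥ u = 0 → u ⬝ᵥ A *ᵥ u < 0) :
    (∀ u ≠ 0, 0 ≤ u ⬝ᵥ A *ᵥ u → l m * (u ⬝ᵥ A *ᵥ u) < u ⬝ᵥ B *ᵥ u) ∧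
      ∃ v, v ⬝ᵥ A *ᵥ v < 0 ∧ v ⬝ᵥ B *ᵥ v = l m * (v ⬝ᵥ A *ᵥ v) := by
  obtain ⟨P, d, hP, hPA, hPB⟩ := exists_transpose_mul_mul_eq_diagonal hA hB hdet.ne hl hroot
  have hAsum := dotProduct_mulVec_mulVec_eq_sum hPA
  have hBsum := dotProduct_mulVec_mulVec_eq_sum hPB
  have hP0 : ∀ {w}, w ≠ 0 → P *ᵥ w ≠ 0 := fun hw h0 =>
    hw (mulVec_injective_of_isUnit hP (h0.trans (mulVec_zero P).symm))
  have hsign : ∀ {i j}, i ≠ j → d i < 0 → 0 < d j :=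
    weight_pos_of_neg_of_pos_on_ker (φ ∘ₗ mulVecLin P) fun w hw h => hAsum w ▸ hφ _ (hP0 hw) h
  obtain ⟨i, hi⟩ := exists_diagonal_neg_of_det_neg hPA hdet hP
  have hdm : d m < 0 := by
    rcases eq_or_ne i m with rfl | him
    · exact hi
    · exact weight_neg_of_neg_of_null_imp_neg
        (fun w hw h => hAsum w ▸ hnull _ (hP0 hw) (hBsum w ▸ h)) hm (hmin i him) hi
  refine ⟨fun u hu hnonneg => ?_, P *ᵥ Pi.single m 1, ?_, ?_⟩
  · obtain ⟨w, rfl⟩ := mulVec_surjective_iff_isUnit.mpr hP u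
    have hw : w ≠ 0 := by rintro rfl; exact hu (mulVec_zero P)
    rw [hAsum] at hnonneg ⊢
    rw [hBsum]
    exact mul_sum_mul_sq_lt_of_nonneg hmin hdm (fun i him => hsign him.symm hdm) hw hnonneg
  · rw [hAsum]; simpa [Pi.single_apply] using hdm
  · rw [hAsum, hBsum]; simp [Pi.single_apply]

end Signs

/-! ### Conics of the pencil -/

lemma dotProduct_add_smul_mulVec {n R : Type*} [Fintype n] [CommRing R] (A B : Matrix n n R)
    (a b : R) (u : n → R) :
    u ⬝ᵥ (a • A + b • B) *ᵥ u = a * (u ⬝ᵥ A *ᵥ u) + b * (u ⬝ᵥ B *ᵥ u) := by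
  simp only [add_mulVec, smul_mulVec, dotProduct_add, dotProduct_smul, smul_eq_mul]

lemma pencil_pos_of_nonneg {n R : Type*} [Fintype n] [CommRing R] [LinearOrder R]
    [IsStrictOrderedRing R] {A B : Matrix n n R} {c a b : R}
    (hdom : ∀ u ≠ 0, 0 ≤ u ⬝ᵥ A *ᵥ u → c * (u ⬝ᵥ A *ᵥ u) < u ⬝ᵥ B *ᵥ u)
    (hb : 0 < b) (hab : 0 < a + c * b) {u : n → R} (hu : u ≠ 0) (hnonneg : 0 ≤ u ⬝ᵥ A *ᵥ u) :
    0 < u ⬝ᵥ (a • A + b • B) *ᵥ u :=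
  calc 0 ≤ (a + c * b) * (u ⬝ᵥ A *ᵥ u) := mul_nonneg hab.le hnonneg
    _ = a * (u ⬝ᵥ A *ᵥ u) + b * (c * (u ⬝ᵥ A *ᵥ u)) := by ring
    _ < a * (u ⬝ᵥ A *ᵥ u) + b * (u ⬝ᵥ B *ᵥ u) := by gcongr; exact hdom u hu hnonneg
    _ = u ⬝ᵥ (a • A + b • B) *ᵥ u := (dotProduct_add_smul_mulVec A B a b u).symm

lemma SA1.pos_of_apply_two_eq_zero {C : Matrix (Fin 3) (Fin 3) ℝ} (hC : SA1 C) {u : Fin 3 → ℝ}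
    (hu : u ≠ 0) (hu2 : u 2 = 0) : 0 < u ⬝ᵥ C *ᵥ u := by
  have hcoord : u = ![u 0, u 1, 0] := by ext i; fin_cases i <;> simp [hu2]
  have hne : (u 0, u 1) ≠ (0, 0) := fun h => by
    obtain ⟨h0, h1⟩ := Prod.mk.inj h
    exact hu (by rw [hcoord, h0, h1]; ext i; fin_cases i <;> rfl)
  rw [hcoord]
  exact hC.2.1 _ _ hne

lemma exists_affine_zero_of_neg {C : Matrix (Fin 3) (Fin 3) ℝ} (hinf : 0 < C 0 0)
    {v : Fin 3 → ℝ} (hv2 : v 2 ≠ 0) (hv : v ⬝ᵥ C *ᵥ v < 0) :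
    ∃ x y : ℝ, ![x, y, 1] ⬝ᵥ C *ᵥ ![x, y, 1] = 0 := by
  set p : Fin 3 → ℝ := ![v 0 / v 2, v 1 / v 2, 1]
  have hp : p ⬝ᵥ C *ᵥ p < 0 := by
    have hvp : v = v 2 • p := by ext i; fin_cases i <;> simp [p] <;> field_simp
    rw [hvp, mulVec_smul, smul_dotProduct, dotProduct_smul, smul_eq_mul, smul_eq_mul,
      ← mul_assoc] at hv
    exact neg_of_mul_neg_right hv (mul_self_nonneg _)
  set e₀ : Fin 3 → ℝ := ![1, 0, 0]
  have he₀ : e₀ ⬝ᵥ C *ᵥ e₀ = C 0 0 := by simp [e₀, mulVec, dotProduct, Fin.sum_univ_three]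
  set β := e₀ ⬝ᵥ C *ᵥ p + p ⬝ᵥ C *ᵥ e₀
  obtain ⟨t, ht⟩ := exists_quadratic_eq_zero (b := β) (c := p ⬝ᵥ C *ᵥ p) hinf.ne'
    ⟨√(discrim (C 0 0) β (p ⬝ᵥ C *ᵥ p)), (mul_self_sqrt (by
      rw [discrim]; nlinarith [sq_nonneg β, mul_pos hinf (neg_pos.mpr hp)])).symm⟩
  refine ⟨v 0 / v 2 + t, v 1 / v 2, ?_⟩
  have hline : ![v 0 / v 2 + t, v 1 / v 2, 1] = p + t • e₀ := by
    ext i; fin_cases i <;> simp [p, e₀]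
  rw [hline, ← ht, ← he₀]
  simp only [mulVec_add, mulVec_smul, add_dotProduct, dotProduct_add, smul_dotProduct,
    dotProduct_smul, smul_eq_mul, β]
  ring

theorem pencil_conic_inside_iff {A B : Matrix (Fin 3) (Fin 3) ℝ} {c ν1 ν2 μ1 μ2 : ℝ}
    (hinf : ∀ u ≠ 0, u 2 = 0 → 0 < u ⬝ᵥ A *ᵥ u)
    (hdom : ∀ u ≠ 0, 0 ≤ u ⬝ᵥ A *ᵥ u → c * (u ⬝ᵥ A *ᵥ u) < u ⬝ᵥ B *ᵥ u)
    (hv : ∃ v, v ⬝ᵥ A *ᵥ v < 0 ∧ v ⬝ᵥ B *ᵥ v = c * (v ⬝ᵥ A *ᵥ v))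
    (hμ2 : 0 < μ2) (hμ : 0 < μ1 + c * μ2) :
    (∀ x y : ℝ, ![x, y, 1] ⬝ᵥ (μ1 • A + μ2 • B) *ᵥ ![x, y, 1] = 0 →
      ![x, y, 1] ⬝ᵥ (ν1 • A + ν2 • B) *ᵥ ![x, y, 1] < 0) ↔ 0 < ν1 * μ2 - ν2 * μ1 := by
  have hsign : ∀ x y : ℝ, ![x, y, 1] ⬝ᵥ (μ1 • A + μ2 • B) *ᵥ ![x, y, 1] = 0 →
      (![x, y, 1] ⬝ᵥ (ν1 • A + ν2 • B) *ᵥ ![x, y, 1] < 0 ↔ 0 < ν1 * μ2 - ν2 * μ1) := by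
    intro x y h
    have hne : ![x, y, 1] ≠ 0 := fun h0 => one_ne_zero (congrFun h0 2)
    have hAneg : ![x, y, 1] ⬝ᵥ A *ᵥ ![x, y, 1] < 0 := by
      by_contra! hnonneg
      exact (pencil_pos_of_nonneg hdom hμ2 hμ hne hnonneg).ne' h
    have hprop : μ2 * -(![x, y, 1] ⬝ᵥ (ν1 • A + ν2 • B) *ᵥ ![x, y, 1]) =
        (ν1 * μ2 - ν2 * μ1) * -(![x, y, 1] ⬝ᵥ A *ᵥ ![x, y, 1]) := by
      rw [dotProduct_add_smul_mulVec] at h ⊢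
      linear_combination -ν2 * h
    rw [← neg_pos, ← mul_pos_iff_of_pos_left hμ2, hprop,
      mul_pos_iff_of_pos_right (neg_pos.mpr hAneg)]
  obtain ⟨x, y, hxy⟩ : ∃ x y : ℝ, ![x, y, 1] ⬝ᵥ (μ1 • A + μ2 • B) *ᵥ ![x, y, 1] = 0 := by
    obtain ⟨v, hvA, hvB⟩ := hv
    have hv0 : v ≠ 0 := by rintro rfl; simp at hvA
    have he : (Pi.single 0 1 : Fin 3 → ℝ) ≠ 0 := by simp
    refine exists_affine_zero_of_neg (v := v) ?_ (fun hv2 => hvA.not_gt (hinf v hv0 hv2)) ?_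
    · simpa using pencil_pos_of_nonneg hdom hμ2 hμ he (hinf _ he (by simp)).le
    · rw [dotProduct_add_smul_mulVec, hvB]
      linarith [mul_neg_of_pos_of_neg hμ hvA]
  exact ⟨fun h => (hsign x y hxy).mp (h x y hxy), fun h x y hxy => (hsign x y hxy).mpr h⟩

/-! ### Elliptic integrals -/

theorem ellF_strictMono {e : ℝ} (he : e ^ 2 < 1) : StrictMono fun φ => ellF φ e := by
  have hpos : ∀ τ : ℝ, 0 < 1 - e ^ 2 * sin τ ^ 2 := fun τ => by
    nlinarith [sin_sq_le_one τ, sq_nonneg e, sq_nonneg (sin τ)]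
  have hcont : Continuous fun τ : ℝ => 1 / √(1 - e ^ 2 * sin τ ^ 2) :=
    continuous_const.div (by fun_prop) fun τ => (sqrt_pos.mpr (hpos τ)).ne'
  intro a b hab
  have hab_pos := intervalIntegral.intervalIntegral_pos_of_pos (hcont.intervalIntegrable a b)
    (fun τ => one_div_pos.mpr (sqrt_pos.mpr (hpos τ))) hab
  have hsplit := intervalIntegral.integral_add_adjacent_intervals
    (hcont.intervalIntegrable (μ := MeasureTheory.volume) 0 a) (hcont.intervalIntegrable a b)
  simp only [ellF]
  linarith

lemma ellK_pos {e : ℝ} (he : e ^ 2 < 1) : 0 < ellK e := by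
  simpa [ellK, ellF] using ellF_strictMono he pi_div_two_pos

/-- The Poncelet rotation number with modulus `e`, as a function of the squared sine `s` of the
amplitude: `ρ(ν)` is its value at `s = (λ₁ - λ₃) ν₂ / (λ₁ ν₂ + ν₁)`. -/
noncomputable def rotationNumber (e s : ℝ) : ℝ :=
  ellF (arcsin √s) e / (2 * ellK e)

theorem rotationNumber_strictMonoOn {e : ℝ} (he : e ^ 2 < 1) :
    StrictMonoOn (rotationNumber e) (Set.Icc 0 1) := by
  have hmem : ∀ s ∈ Set.Icc (0 : ℝ) 1, √s ∈ Set.Icc (-1) 1 := fun s hs =>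
    ⟨by linarith [sqrt_nonneg s], sqrt_le_one.mpr hs.2⟩
  intro s hs t ht hst
  have hK := ellK_pos he
  refine div_lt_div_of_pos_right (ellF_strictMono he ?_) (by positivity)
  exact strictMonoOn_arcsin (hmem s hs) (hmem t ht) (sqrt_lt_sqrt hs.1 hst)

lemma sq_sqrt_div_sub_lt_one {a b c : ℝ} (hab : b < a) (hbc : c < b) :
    √((a - b) / (a - c)) ^ 2 < 1 := by
  rw [sq_sqrt (div_nonneg (by linarith) (by linarith)), div_lt_one (by linarith)]
  linarith

lemma sub_mul_div_mem_Icc {K : Type*} [Field K] [LinearOrder K] [IsStrictOrderedRing K]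
    {a c x y : K} (hac : c < a) (hy : 0 < y) (hxy : 0 < x + c * y) :
    (a - c) * y / (a * y + x) ∈ Set.Icc 0 1 := by
  have hden : (a - c) * y < a * y + x := by linarith
  have hnum : 0 < (a - c) * y := mul_pos (sub_pos.mpr hac) hy
  exact ⟨div_nonneg hnum.le (hnum.trans hden).le, (div_le_one (hnum.trans hden)).mpr hden.le⟩

lemma sub_mul_div_lt_iff {K : Type*} [Field K] [LinearOrder K] [IsStrictOrderedRing K]
    {a c x y z w : K} (hac : c < a) (hy : 0 < a * y + x) (hw : 0 < a * w + z) :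
    (a - c) * y / (a * y + x) < (a - c) * w / (a * w + z) ↔ 0 < x * w - y * z := by
  have hcross : (a - c) * w * (a * y + x) - (a - c) * y * (a * w + z) =
      (a - c) * (x * w - y * z) := by ring
  rw [div_lt_div_iff₀ hy hw, ← sub_pos, hcross, mul_pos_iff_of_pos_left (sub_pos.mpr hac)]

theorem rotationNumber_lt_iff {e a c ν1 ν2 μ1 μ2 : ℝ} (he : e ^ 2 < 1) (hac : c < a)
    (hν2 : 0 < ν2) (hν : 0 < ν1 + c * ν2) (hμ2 : 0 < μ2) (hμ : 0 < μ1 + c * μ2) :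
    rotationNumber e ((a - c) * ν2 / (a * ν2 + ν1)) <
      rotationNumber e ((a - c) * μ2 / (a * μ2 + μ1)) ↔ 0 < ν1 * μ2 - ν2 * μ1 := by
  rw [(rotationNumber_strictMonoOn he).lt_iff_lt (sub_mul_div_mem_Icc hac hν2 hν)
    (sub_mul_div_mem_Icc hac hμ2 hμ)]
  exact sub_mul_div_lt_iff hac (by nlinarith) (by nlinarith)

/-- Monotonicity: for a pencil with eigenvalues `λ1 > λ2 > λ3 > 0`
and valid parameters `ν`, `μ`, the following are equivalent: `C_μ` lies in the
interior of `C_ν`; the cross product `ν1 μ2 − ν2 μ1` is positive; and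
`ρ(μ) > ρ(ν)`. -/
theorem poncelet_monotonicity (C1 C2 : Matrix (Fin 3) (Fin 3) ℝ) (l1 l2 l3 : ℝ)
    (hC1 : SA1 C1) (hC2 : SA1 C2)
    (h12 : l2 < l1) (h23 : l3 < l2) (h3 : 0 < l3)
    (hchar : (C1⁻¹ * C2).charpoly =
      (X - Polynomial.C l1) * (X - Polynomial.C l2) * (X - Polynomial.C l3))
    (hSA3 : ∀ u : Fin 3 → ℝ, u ≠ 0 → u ⬝ᵥ C2.mulVec u = 0 → u ⬝ᵥ C1.mulVec u < 0)
    (ν1 ν2 μ1 μ2 : ℝ)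
    (hν2 : 0 < ν2) (hν : 0 < ν1 + l3 * ν2)
    (hμ2 : 0 < μ2) (hμ : 0 < μ1 + l3 * μ2) :
    let e := Real.sqrt ((l1 - l2) / (l1 - l3))
    let Cν := ν1 • C1 + ν2 • C2
    let Cμ := μ1 • C1 + μ2 • C2
    let ρν := ellF (Real.arcsin (Real.sqrt ((l1 - l3) * ν2 / (l1 * ν2 + ν1)))) e /
      (2 * ellK e)
    let ρμ := ellF (Real.arcsin (Real.sqrt ((l1 - l3) * μ2 / (l1 * μ2 + μ1)))) e /
      (2 * ellK e)
    ((∀ x y : ℝ, ![x, y, 1] ⬝ᵥ Cμ.mulVec ![x, y, 1] = 0 →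
        ![x, y, 1] ⬝ᵥ Cν.mulVec ![x, y, 1] < 0) ↔ 0 < ν1 * μ2 - ν2 * μ1) ∧
    (0 < ν1 * μ2 - ν2 * μ1 ↔ ρν < ρμ) := by
  intro e Cν Cμ ρν ρμ
  have hinf : ∀ u ≠ 0, u 2 = 0 → 0 < u ⬝ᵥ C1 *ᵥ u := fun _ => hC1.pos_of_apply_two_eq_zero
  have hl : StrictAnti ![l1, l2, l3] := by
    rw [Fin.strictAnti_iff_succ_lt]
    intro i; fin_cases i <;> simpa
  have hroot : ∀ i, (C1⁻¹ * C2).charpoly.IsRoot (![l1, l2, l3] i) := by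
    rw [hchar]
    intro i; fin_cases i <;> simp
  have hmin : ∀ i, i ≠ 2 → l3 < ![l1, l2, l3] i := fun i hi =>
    hl (Fin.lt_last_iff_ne_last.mpr hi)
  obtain ⟨hdom, hv⟩ := least_eigenvalue_mul_lt_and_exists_eq (m := 2) hC1.1 hC2.1 hC1.2.2
    (LinearMap.proj 2) hinf hl.injective hroot h3 hmin hSA3
  exact ⟨pencil_conic_inside_iff hinf hdom hv hμ2 hμ,
    (rotationNumber_lt_iff (sq_sqrt_div_sub_lt_one h12 h23) (h23.trans h12) hν2 hν hμ2 hμ).symm⟩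
end

section
/- Let λ1 > λ2 > λ3 > 0, e = √((λ1−λ2)/(λ1−λ3)), and let ρ = F(arcsin √((λ1−λ3)/λ1), e)/(2K(e)) be the rotation number of the Poncelet map associated with the parameter ν_i = (0,1). Then: (1) ρ = 1/4 if and only if λ1λ2 − λ1λ3 − λ2λ3 = 0; (2) ρ = 1/3 if and only if 1/√λ3 = 1/√λ1 + 1/√λ2; (3) ρ = 1/6 if and only if √(1−λ3/λ1) + √(1−λ3/λ2) = 1. -/
open Real

/-! Two substitutions `φ ↦ g φ` multiply the elliptic differential `dφ / Δ(φ)` by a constant: the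
complement `tan (g φ) = cot φ / √(1 - e²)` by `-1`, and the duplication
`tan (g φ / 2) = tan φ · Δ(φ)` by `2`. As `F` is strictly increasing, rotation number `1/4`, `1/3`,
`1/6` at the amplitude `ω` (that is, `2F(ω)` equal to `K`, `2K - F(ω)`, `K - F(ω)` respectively)
says that the duplicate of `ω` is `π/2`, `π - ω`, or the complement of `ω`. Each is an algebraic
relation between `sin ω`, `cos ω` and `Δ(ω)`, which are square roots of rational functions of the
eigenvalues. -/

section Trigonometry

lemma tan_half_eq_sin_div_one_add_cos (θ : ℝ) : tan (θ / 2) = sin θ / (1 + cos θ) := by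
  obtain ⟨x, rfl⟩ : ∃ x, θ = 2 * x := ⟨θ / 2, by ring⟩
  rw [mul_div_cancel_left₀ x two_ne_zero, sin_two_mul, cos_two_mul, tan_eq_sin_div_cos]
  by_cases hx : cos x = 0
  · simp [hx]
  · field_simp
    ring

lemma cos_two_mul_arctan (x : ℝ) : cos (2 * arctan x) = (1 - x ^ 2) / (1 + x ^ 2) := by
  rw [cos_two_mul, cos_sq_arctan]
  have : 0 < 1 + x ^ 2 := by positivity
  field_simp
  ring

lemma two_mul_arctan_eq_iff {x θ : ℝ} (hθ : θ ∈ Set.Ioo (-π) π) :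
    2 * arctan x = θ ↔ x = sin θ / (1 + cos θ) := by
  obtain ⟨hθ₁, hθ₂⟩ := hθ
  have hhalf : arctan (tan (θ / 2)) = θ / 2 := arctan_tan (by linarith) (by linarith)
  rw [← tan_half_eq_sin_div_one_add_cos, ← arctan_injective.eq_iff (a := x), hhalf,
    eq_div_iff two_ne_zero, mul_comm]

end Trigonometry

/-- Legendre's delta amplitude `Δ(φ, k) = √(1 - k² sin² φ)`, the reciprocal of the integrand
of `ellF`. -/
noncomputable def ellDelta (φ k : ℝ) : ℝ := √(1 - k ^ 2 * sin φ ^ 2)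

/-- The amplitude of `K - u` when `φ ∈ (-π/2, π/2)` is the amplitude of `u`. It is written through
`arctan (√(1 - k²) tan φ)` so that it is smooth on the whole interval, including `φ = 0`. -/
noncomputable def complAmplitude (φ k : ℝ) : ℝ := π / 2 - arctan (√(1 - k ^ 2) * tan φ)

/-- The amplitude of `2u` when `φ ∈ (-π/2, π/2)` is the amplitude of `u`. -/
noncomputable def doubleAmplitude (φ k : ℝ) : ℝ := 2 * arctan (tan φ * ellDelta φ k)

section EllipticIntegral

variable {k φ : ℝ}

lemma one_sub_sq_mul_sin_sq_pos (hk : k ^ 2 < 1) (φ : ℝ) : 0 < 1 - k ^ 2 * sin φ ^ 2 := by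
  nlinarith [sin_sq_le_one φ, sq_nonneg k]

lemma ellDelta_pos (hk : k ^ 2 < 1) (φ : ℝ) : 0 < ellDelta φ k :=
  sqrt_pos.2 (one_sub_sq_mul_sin_sq_pos hk φ)

lemma ellDelta_sq (hk : k ^ 2 < 1) (φ : ℝ) : ellDelta φ k ^ 2 = 1 - k ^ 2 * sin φ ^ 2 :=
  sq_sqrt (one_sub_sq_mul_sin_sq_pos hk φ).le

lemma ellDelta_eq_of_sq_eq {d : ℝ} (hd : 0 ≤ d) (h : d ^ 2 = 1 - k ^ 2 * sin φ ^ 2) :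
    ellDelta φ k = d := by
  rw [ellDelta, ← h, sqrt_sq hd]

lemma cos_sq_add_mul_sin_sq (hk : k ^ 2 < 1) (φ : ℝ) :
    cos φ ^ 2 + √(1 - k ^ 2) ^ 2 * sin φ ^ 2 = ellDelta φ k ^ 2 := by
  rw [sq_sqrt (by linarith), ellDelta_sq hk, cos_sq']
  ring

lemma hasDerivAt_ellDelta (hk : k ^ 2 < 1) (φ : ℝ) :
    HasDerivAt (ellDelta · k) (-(k ^ 2 * sin φ * cos φ) / ellDelta φ k) φ := by
  have hsq := (((hasDerivAt_sin φ).fun_pow 2).const_mul (k ^ 2)).const_sub 1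
  refine (hsq.sqrt (one_sub_sq_mul_sin_sq_pos hk φ).ne').congr_deriv ?_
  rw [← ellDelta]
  have := ellDelta_pos hk φ
  norm_num
  field_simp

lemma hasDerivAt_ellF (hk : k ^ 2 < 1) (φ : ℝ) :
    HasDerivAt (ellF · k) (1 / ellDelta φ k) φ := by
  have hcont : Continuous fun τ ↦ 1 / √(1 - k ^ 2 * sin τ ^ 2) :=
    continuous_const.div (by fun_prop) fun τ ↦ (ellDelta_pos hk τ).ne'
  exact (hcont.integral_hasStrictDerivAt 0 φ).hasDerivAt

lemma ellF_zero (k : ℝ) : ellF 0 k = 0 := by simp [ellF]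

lemma ellF_strictMono_s11 (hk : k ^ 2 < 1) : StrictMono (ellF · k) :=
  strictMono_of_deriv_pos fun φ ↦ by
    rw [(hasDerivAt_ellF hk φ).deriv]
    exact one_div_pos.2 (ellDelta_pos hk φ)

lemma ellF_inj (hk : k ^ 2 < 1) {φ ψ : ℝ} : ellF φ k = ellF ψ k ↔ φ = ψ :=
  (ellF_strictMono_s11 hk).injective.eq_iff

lemma ellK_pos_s11 (hk : k ^ 2 < 1) : 0 < ellK k :=
  (ellF_zero k).symm.trans_lt (ellF_strictMono_s11 hk pi_div_two_pos)

lemma ellF_comp_sub_mul_ellF_eq (hk : k ^ 2 < 1) {s : Set ℝ} (hs : IsOpen s)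
    (hs' : IsPreconnected s) {g : ℝ → ℝ} {m : ℝ}
    (hg : ∀ x ∈ s, HasDerivAt g (m * (ellDelta (g x) k / ellDelta x k)) x)
    {x y : ℝ} (hx : x ∈ s) (hy : y ∈ s) :
    ellF (g x) k - m * ellF x k = ellF (g y) k - m * ellF y k := by
  have hderiv : ∀ z ∈ s, HasDerivAt (fun z ↦ ellF (g z) k - m * ellF z k) 0 z := fun z hz ↦ by
    have hcomp := (hasDerivAt_ellF hk (g z)).comp z (hg z hz)
    refine (hcomp.sub ((hasDerivAt_ellF hk z).const_mul m)).congr_deriv ?_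
    have := ellDelta_pos hk (g z)
    field_simp
    ring
  exact hs.is_const_of_deriv_eq_zero hs'
    (fun z hz ↦ (hderiv z hz).differentiableAt.differentiableWithinAt)
    (fun z hz ↦ (hderiv z hz).deriv) hx hy

lemma ellF_pi_sub (hk : k ^ 2 < 1) (φ : ℝ) : ellF (π - φ) k = 2 * ellK k - ellF φ k := by
  have hderiv (x : ℝ) :
      HasDerivAt (π - ·) (-1 * (ellDelta (π - x) k / ellDelta x k)) x := by
    refine ((hasDerivAt_id x).const_sub π).congr_deriv ?_
    have : ellDelta (π - x) k = ellDelta x k := by rw [ellDelta, sin_pi_sub, ellDelta]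
    rw [this, div_self (ellDelta_pos hk x).ne', mul_one]
  have hconst := ellF_comp_sub_mul_ellF_eq hk isOpen_univ isPreconnected_univ
    (fun x _ ↦ hderiv x) (Set.mem_univ φ) (Set.mem_univ (π / 2))
  rw [sub_half] at hconst
  unfold ellK
  linarith

section Complement

lemma sin_complAmplitude (hk : k ^ 2 < 1) (hφ : 0 < cos φ) :
    sin (complAmplitude φ k) = cos φ / ellDelta φ k := by
  have hΔ := ellDelta_pos hk φ
  have hsq : 1 + (√(1 - k ^ 2) * tan φ) ^ 2 = (ellDelta φ k / cos φ) ^ 2 := by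
    rw [tan_eq_sin_div_cos, div_pow, ← cos_sq_add_mul_sin_sq hk]
    field_simp
  rw [complAmplitude, sin_pi_div_two_sub, cos_arctan, hsq, sqrt_sq (by positivity), one_div_div]

lemma cos_complAmplitude (hk : k ^ 2 < 1) (hφ : 0 < cos φ) :
    cos (complAmplitude φ k) = √(1 - k ^ 2) * sin φ / ellDelta φ k := by
  have hcos := sin_complAmplitude hk hφ
  rw [complAmplitude, sin_pi_div_two_sub] at hcos
  rw [complAmplitude, cos_pi_div_two_sub, ← tan_mul_cos (cos_arctan_pos _).ne', hcos, tan_arctan,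
    tan_eq_sin_div_cos]
  field_simp

lemma complAmplitude_mem_Ioo (φ k : ℝ) : complAmplitude φ k ∈ Set.Ioo 0 π := by
  obtain ⟨hlo, hhi⟩ := arctan_mem_Ioo (√(1 - k ^ 2) * tan φ)
  constructor <;> unfold complAmplitude <;> linarith

lemma ellDelta_complAmplitude (hk : k ^ 2 < 1) (hφ : 0 < cos φ) :
    ellDelta (complAmplitude φ k) k = √(1 - k ^ 2) / ellDelta φ k := by
  have hΔ := ellDelta_pos hk φ
  refine ellDelta_eq_of_sq_eq (by positivity) ?_
  rw [sin_complAmplitude hk hφ, div_pow, div_pow, sq_sqrt (by linarith), ellDelta_sq hk]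
  have := one_sub_sq_mul_sin_sq_pos hk φ
  field_simp
  rw [cos_sq']
  ring

lemma hasDerivAt_complAmplitude (hk : k ^ 2 < 1) (hφ : 0 < cos φ) :
    HasDerivAt (complAmplitude · k)
      (-1 * (ellDelta (complAmplitude φ k) k / ellDelta φ k)) φ := by
  refine ((((hasDerivAt_tan hφ.ne').const_mul _).arctan).const_sub (π / 2)).congr_deriv ?_
  have hΔ := ellDelta_pos hk φ
  have hsq := cos_sq_add_mul_sin_sq hk φ
  rw [ellDelta_complAmplitude hk hφ, tan_eq_sin_div_cos]
  field_simp
  rw [hsq]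

lemma ellF_complAmplitude (hk : k ^ 2 < 1) (hφ : φ ∈ Set.Ioo (-(π / 2)) (π / 2)) :
    ellF (complAmplitude φ k) k = ellK k - ellF φ k := by
  have hconst := ellF_comp_sub_mul_ellF_eq hk isOpen_Ioo isPreconnected_Ioo
    (fun x hx ↦ hasDerivAt_complAmplitude hk (cos_pos_of_mem_Ioo hx)) hφ
    (Set.mem_Ioo.2 ⟨neg_lt_zero.2 pi_div_two_pos, pi_div_two_pos⟩)
  have hzero : complAmplitude 0 k = π / 2 := by simp [complAmplitude]
  rw [hzero, ellF_zero, ← ellK] at hconst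
  linarith

end Complement

section Duplication

lemma cos_doubleAmplitude (hφ : cos φ ≠ 0) :
    cos (doubleAmplitude φ k) = (cos φ ^ 2 - sin φ ^ 2 * ellDelta φ k ^ 2) /
      (cos φ ^ 2 + sin φ ^ 2 * ellDelta φ k ^ 2) := by
  rw [doubleAmplitude, cos_two_mul_arctan, tan_eq_sin_div_cos]
  field_simp

lemma ellDelta_doubleAmplitude (hk : k ^ 2 < 1) (hφ : cos φ ≠ 0) :
    ellDelta (doubleAmplitude φ k) k = (ellDelta φ k ^ 2 - k ^ 2 * sin φ ^ 2 * cos φ ^ 2) /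
      (cos φ ^ 2 + sin φ ^ 2 * ellDelta φ k ^ 2) := by
  have hnum : 0 < ellDelta φ k ^ 2 - k ^ 2 * sin φ ^ 2 * cos φ ^ 2 := by
    calc 0 < (1 - k ^ 2 * sin φ ^ 2) ^ 2 + k ^ 2 * (1 - k ^ 2) * (sin φ ^ 2) ^ 2 := by
          have := one_sub_sq_mul_sin_sq_pos hk φ
          have := sub_pos.2 hk
          positivity
      _ = ellDelta φ k ^ 2 - k ^ 2 * sin φ ^ 2 * cos φ ^ 2 := by
          rw [ellDelta_sq hk, cos_sq']
          ring
  refine ellDelta_eq_of_sq_eq (by positivity) ?_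
  rw [sin_sq (doubleAmplitude φ k), cos_doubleAmplitude hφ]
  field_simp
  rw [ellDelta_sq hk, cos_sq']
  ring

lemma hasDerivAt_doubleAmplitude (hk : k ^ 2 < 1) (hφ : cos φ ≠ 0) :
    HasDerivAt (doubleAmplitude · k)
      (2 * (ellDelta (doubleAmplitude φ k) k / ellDelta φ k)) φ := by
  have hprod := (hasDerivAt_tan hφ).fun_mul (hasDerivAt_ellDelta hk φ)
  refine (hprod.arctan.const_mul 2).congr_deriv ?_
  have hΔ := ellDelta_pos hk φ
  rw [ellDelta_doubleAmplitude hk hφ, tan_eq_sin_div_cos]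
  field_simp
  ring

lemma ellF_doubleAmplitude (hk : k ^ 2 < 1) (hφ : φ ∈ Set.Ioo (-(π / 2)) (π / 2)) :
    ellF (doubleAmplitude φ k) k = 2 * ellF φ k := by
  have hconst := ellF_comp_sub_mul_ellF_eq hk isOpen_Ioo isPreconnected_Ioo
    (fun x hx ↦ hasDerivAt_doubleAmplitude hk (cos_pos_of_mem_Ioo hx).ne') hφ
    (Set.mem_Ioo.2 ⟨neg_lt_zero.2 pi_div_two_pos, pi_div_two_pos⟩)
  have hzero : doubleAmplitude 0 k = 0 := by simp [doubleAmplitude]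
  rw [hzero, ellF_zero] at hconst
  linarith

lemma two_mul_ellF_eq_ellF_iff (hk : k ^ 2 < 1) (hφ : φ ∈ Set.Ioo (-(π / 2)) (π / 2))
    {θ : ℝ} (hθ : θ ∈ Set.Ioo (-π) π) :
    2 * ellF φ k = ellF θ k ↔ tan φ * ellDelta φ k = sin θ / (1 + cos θ) := by
  rw [← ellF_doubleAmplitude hk hφ, ellF_inj hk, doubleAmplitude, two_mul_arctan_eq_iff hθ]

end Duplication

section RotationNumber

lemma ellF_div_two_mul_ellK_eq_one_fourth_iff (hk : k ^ 2 < 1)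
    (hφ : φ ∈ Set.Ioo (-(π / 2)) (π / 2)) :
    ellF φ k / (2 * ellK k) = 1 / 4 ↔ sin φ * ellDelta φ k = cos φ := by
  have hK := ellK_pos_s11 hk
  have hcos := cos_pos_of_mem_Ioo hφ
  calc ellF φ k / (2 * ellK k) = 1 / 4 ↔ 2 * ellF φ k = ellF (π / 2) k := by
        rw [← ellK, div_eq_iff (by positivity)]
        constructor <;> intro h <;> linarith
    _ ↔ tan φ * ellDelta φ k = 1 := by
        rw [two_mul_ellF_eq_ellF_iff hk hφ (by constructor <;> linarith [pi_pos])]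
        simp
    _ ↔ sin φ * ellDelta φ k = cos φ := by
        rw [tan_eq_sin_div_cos, div_mul_eq_mul_div, div_eq_one_iff_eq hcos.ne']

lemma ellF_div_two_mul_ellK_eq_one_third_iff (hk : k ^ 2 < 1) (hφ : φ ∈ Set.Ioo 0 (π / 2)) :
    ellF φ k / (2 * ellK k) = 1 / 3 ↔ ellDelta φ k * (1 - cos φ) = cos φ := by
  obtain ⟨hφ₁, hφ₂⟩ := hφ
  have hK := ellK_pos_s11 hk
  have hsin : 0 < sin φ := sin_pos_of_pos_of_lt_pi hφ₁ (by linarith)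
  have hcos : 0 < cos φ := cos_pos_of_mem_Ioo ⟨by linarith, hφ₂⟩
  have hcos' : 0 < 1 - cos φ := by nlinarith [sin_sq_add_cos_sq φ]
  calc ellF φ k / (2 * ellK k) = 1 / 3 ↔ 2 * ellF φ k = ellF (π - φ) k := by
        rw [ellF_pi_sub hk, div_eq_iff (by positivity)]
        constructor <;> intro h <;> linarith
    _ ↔ tan φ * ellDelta φ k = sin φ / (1 - cos φ) := by
        rw [two_mul_ellF_eq_ellF_iff hk ⟨by linarith, hφ₂⟩ ⟨by linarith, by linarith⟩,
          sin_pi_sub, cos_pi_sub, ← sub_eq_add_neg]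
    _ ↔ ellDelta φ k * (1 - cos φ) = cos φ := by
        rw [tan_eq_sin_div_cos]
        field_simp

lemma ellF_div_two_mul_ellK_eq_one_sixth_iff (hk : k ^ 2 < 1)
    (hφ : φ ∈ Set.Ioo (-(π / 2)) (π / 2)) :
    ellF φ k / (2 * ellK k) = 1 / 6 ↔ sin φ + √(1 - k ^ 2) * sin φ / ellDelta φ k = 1 := by
  have hK := ellK_pos_s11 hk
  have hΔ := ellDelta_pos hk φ
  have hcos := cos_pos_of_mem_Ioo hφ
  have hmem : complAmplitude φ k ∈ Set.Ioo (-π) π :=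
    Set.Ioo_subset_Ioo_left (neg_nonpos.2 pi_pos.le) (complAmplitude_mem_Ioo φ k)
  have hsc := sin_sq_add_cos_sq (complAmplitude φ k)
  calc ellF φ k / (2 * ellK k) = 1 / 6 ↔ 2 * ellF φ k = ellF (complAmplitude φ k) k := by
        rw [ellF_complAmplitude hk hφ, div_eq_iff (by positivity)]
        constructor <;> intro h <;> linarith
    _ ↔ tan φ * ellDelta φ k = cos φ / ellDelta φ k / (1 + cos (complAmplitude φ k)) := by
        rw [two_mul_ellF_eq_ellF_iff hk hφ hmem, sin_complAmplitude hk hcos]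
    _ ↔ sin φ + cos (complAmplitude φ k) = 1 := by
        rw [sin_complAmplitude hk hcos] at hsc
        generalize cos (complAmplitude φ k) = y at hsc ⊢
        have hcosΔ : 0 < cos φ / ellDelta φ k := by positivity
        have hy : 0 < 1 + y := by nlinarith
        have hcos_sq : cos φ ^ 2 = (1 - y) * (ellDelta φ k ^ 2 * (1 + y)) := by
          field_simp at hsc
          linarith
        have hfactor : 0 < ellDelta φ k ^ 2 * (1 + y) := by positivity
        rw [tan_eq_sin_div_cos, ← eq_sub_iff_add_eq, ← mul_left_inj' (a := sin φ) hfactor.ne',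
          ← hcos_sq]
        field_simp
    _ ↔ sin φ + √(1 - k ^ 2) * sin φ / ellDelta φ k = 1 := by
        rw [cos_complAmplitude hk hcos]

end RotationNumber

end EllipticIntegral

/-- The eccentricity `e` of the pencil with eigenvalues `l1 > l2 > l3`. -/
noncomputable def pencilEccentricity (l1 l2 l3 : ℝ) : ℝ := √((l1 - l2) / (l1 - l3))

/-- The amplitude `ω(ν)` of the Poncelet map for the parameter `ν = (0, 1)`, whose rotation number
is `F(ω(ν), e) / (2 K(e))`. -/
noncomputable def ponceletAmplitude (l1 l3 : ℝ) : ℝ := arcsin √((l1 - l3) / l1)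

section Pencil

variable {l1 l2 l3 : ℝ}

lemma one_sub_pencilEccentricity_sq (h12 : l2 ≤ l1) (h13 : l3 < l1) :
    1 - pencilEccentricity l1 l2 l3 ^ 2 = (l2 - l3) / (l1 - l3) := by
  have h13' := sub_pos.2 h13
  rw [pencilEccentricity, sq_sqrt (div_nonneg (sub_nonneg.2 h12) h13'.le)]
  field_simp
  ring

lemma pencilEccentricity_sq_lt_one (h12 : l2 ≤ l1) (h23 : l3 < l2) :
    pencilEccentricity l1 l2 l3 ^ 2 < 1 := by
  have h13 : l3 < l1 := h23.trans_le h12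
  rw [← sub_pos, one_sub_pencilEccentricity_sq h12 h13]
  exact div_pos (sub_pos.2 h23) (sub_pos.2 h13)

lemma ponceletAmplitude_mem_Ioo (h13 : l3 < l1) (h3 : 0 < l3) :
    ponceletAmplitude l1 l3 ∈ Set.Ioo 0 (π / 2) := by
  have h1 := h3.trans h13
  refine ⟨arcsin_pos.2 (sqrt_pos.2 (div_pos (sub_pos.2 h13) h1)), arcsin_lt_pi_div_two.2 ?_⟩
  rw [sqrt_lt' one_pos, one_pow, div_lt_one h1]
  linarith

lemma sin_ponceletAmplitude (h1 : 0 < l1) (h3 : 0 ≤ l3) :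
    sin (ponceletAmplitude l1 l3) = √(1 - l3 / l1) := by
  rw [ponceletAmplitude, one_sub_div h1.ne',
    sin_arcsin (by linarith [sqrt_nonneg ((l1 - l3) / l1)])]
  rw [sqrt_le_one, div_le_one h1]
  linarith

lemma cos_ponceletAmplitude (h13 : l3 ≤ l1) (h1 : 0 < l1) (h3 : 0 ≤ l3) :
    cos (ponceletAmplitude l1 l3) = √l3 / √l1 := by
  rw [ponceletAmplitude, cos_arcsin, sq_sqrt (div_nonneg (sub_nonneg.2 h13) h1.le), ← sqrt_div h3]
  congr 1
  field_simp
  ring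

lemma ellDelta_ponceletAmplitude (h12 : l2 ≤ l1) (h13 : l3 < l1) (h2 : 0 ≤ l2) (h3 : 0 ≤ l3) :
    ellDelta (ponceletAmplitude l1 l3) (pencilEccentricity l1 l2 l3) = √l2 / √l1 := by
  have h1 : 0 < l1 := h3.trans_lt h13
  have h13' := sub_pos.2 h13
  have hle : l3 / l1 ≤ 1 := (div_le_one h1).2 h13.le
  rw [ellDelta, sin_ponceletAmplitude h1 h3, sq_sqrt (sub_nonneg.2 hle), pencilEccentricity,
    sq_sqrt (div_nonneg (sub_nonneg.2 h12) h13'.le), ← sqrt_div h2]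
  congr 1
  field_simp
  ring

lemma mul_sin_div_ellDelta_ponceletAmplitude (h12 : l2 ≤ l1) (h23 : l3 < l2) (h3 : 0 ≤ l3) :
    √(1 - pencilEccentricity l1 l2 l3 ^ 2) * sin (ponceletAmplitude l1 l3) /
      ellDelta (ponceletAmplitude l1 l3) (pencilEccentricity l1 l2 l3) = √(1 - l3 / l2) := by
  have h2 : 0 < l2 := h3.trans_lt h23
  have h1 : 0 < l1 := h2.trans_le h12
  have h13 : l3 < l1 := h23.trans_le h12
  have h13' := sub_pos.2 h13
  have h23' := sub_pos.2 h23
  rw [one_sub_pencilEccentricity_sq h12 h13, sin_ponceletAmplitude h1 h3,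
    ellDelta_ponceletAmplitude h12 h13 h2.le h3, ← sqrt_div h2.le,
    ← sqrt_mul (by positivity), ← sqrt_div' _ (by positivity)]
  congr 1
  field_simp

lemma sqrt_mul_sqrt_div_sqrt_eq_iff (h13 : l3 ≤ l1) (h1 : 0 < l1) (h2 : 0 ≤ l2) (h3 : 0 ≤ l3) :
    √(1 - l3 / l1) * (√l2 / √l1) = √l3 / √l1 ↔ l1 * l2 - l1 * l3 - l2 * l3 = 0 := by
  have hle : l3 / l1 ≤ 1 := (div_le_one h1).2 h13
  rw [← mul_div_assoc, div_left_inj' (sqrt_pos.2 h1).ne', ← sqrt_mul (sub_nonneg.2 hle),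
    sqrt_inj (mul_nonneg (sub_nonneg.2 hle) h2) h3]
  field_simp
  constructor <;> intro h <;> linarith

lemma div_mul_one_sub_div_eq_iff {a b c : ℝ} (ha : a ≠ 0) (hb : b ≠ 0) (hc : c ≠ 0) :
    b / a * (1 - c / a) = c / a ↔ 1 / c = 1 / a + 1 / b := by
  field_simp
  constructor <;> intro h <;> linarith

end Pencil

/-- eigenvalue conditions for the Poncelet map of the pencil element
`ν_i = (0,1)` to have rotation number `1/4`, `1/3`, and `1/6`. -/
theorem eigenvalue_porism_conditions (l1 l2 l3 : ℝ)
    (h12 : l2 < l1) (h23 : l3 < l2) (h3 : 0 < l3) :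
    let e := Real.sqrt ((l1 - l2) / (l1 - l3))
    let ρ := ellF (Real.arcsin (Real.sqrt ((l1 - l3) / l1))) e / (2 * ellK e)
    (ρ = 1 / 4 ↔ l1 * l2 - l1 * l3 - l2 * l3 = 0) ∧
    (ρ = 1 / 3 ↔ 1 / Real.sqrt l3 = 1 / Real.sqrt l1 + 1 / Real.sqrt l2) ∧
    (ρ = 1 / 6 ↔ Real.sqrt (1 - l3 / l1) + Real.sqrt (1 - l3 / l2) = 1) := by
  intro e ρ
  have h13 : l3 < l1 := h23.trans h12
  have h1 : 0 < l1 := h3.trans h13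
  have h2 : 0 < l2 := h3.trans h23
  have he : e ^ 2 < 1 := pencilEccentricity_sq_lt_one h12.le h23
  have hω : ponceletAmplitude l1 l3 ∈ Set.Ioo 0 (π / 2) := ponceletAmplitude_mem_Ioo h13 h3
  have hω' : ponceletAmplitude l1 l3 ∈ Set.Ioo (-(π / 2)) (π / 2) :=
    Set.Ioo_subset_Ioo_left (neg_nonpos.2 pi_div_two_pos.le) hω
  have hsin := sin_ponceletAmplitude h1 h3.le
  have hcos := cos_ponceletAmplitude h13.le h1 h3.le
  have hΔ : ellDelta (ponceletAmplitude l1 l3) e = √l2 / √l1 :=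
    ellDelta_ponceletAmplitude h12.le h13 h2.le h3.le
  refine ⟨(ellF_div_two_mul_ellK_eq_one_fourth_iff he hω').trans ?_,
    (ellF_div_two_mul_ellK_eq_one_third_iff he hω).trans ?_,
    (ellF_div_two_mul_ellK_eq_one_sixth_iff he hω').trans ?_⟩
  · rw [hsin, hcos, hΔ, sqrt_mul_sqrt_div_sqrt_eq_iff h13.le h1 h2.le h3.le]
  · rw [hcos, hΔ, div_mul_one_sub_div_eq_iff (sqrt_ne_zero'.2 h1) (sqrt_ne_zero'.2 h2)
      (sqrt_ne_zero'.2 h3)]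
  · rw [← mul_sin_div_ellDelta_ponceletAmplitude h12.le h23 h3.le, hsin]
    rfl
end
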